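/- Let R = (R_n : n ∈ ℕ) be a computable sequence of subsets of ℕ that admits no computable R-cohesive set. Then for every 3-generic G ∈ 2^ℕ and every use-monotone Turing functional Φ, the set dom Φ(G) ⊆ ℕ is not R-cohesive. -/

import Mathlib

open MeasureTheory

/-- Finite binary strings. -/
abbrev BinStr := List Bool

/-- `σ` is a (finite) initial segment of `X ∈ 2^ℕ`. -/
def IsInitSeg (σ : BinStr) (X : ℕ → Bool) : Prop :=
  ∀ i, i < σ.length → σ.getD i false = X i

/-- `A ⊆* B` : all but finitely many elements of `A` are in `B`. -/
def SubsetStar (A B : Set ℕ) : Prop := (A \ B).Finite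

/-- `C` is cohesive for the sequence `R`. -/
def Cohesive (R : ℕ → Set ℕ) (C : Set ℕ) : Prop :=
  C.Infinite ∧ ∀ n, SubsetStar C (R n) ∨ SubsetStar C (R n)ᶜ

/-- A set of naturals is computable if its characteristic function is computable. -/
def ComputableSet (A : Set ℕ) : Prop :=
  ∃ f : ℕ → Bool, Computable f ∧ ∀ n, n ∈ A ↔ f n = true

/-- A sequence of sets is computable if `{(n,x) : x ∈ R n}` is computable. -/
def ComputableSeq (R : ℕ → Set ℕ) : Prop :=
  ∃ f : ℕ → ℕ → Bool, Computable₂ f ∧ ∀ n x, x ∈ R n ↔ f n x = true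

/-- A use-monotone Turing functional: a partial computable map from
(strings × ℕ) to ℕ whose domain is monotone along extension of strings. -/
structure TuringFunctional where
  Φ : BinStr × ℕ →. ℕ
  partrec : Partrec Φ
  mono : ∀ ⦃σ τ : BinStr⦄, σ <+: τ → ∀ x, (Φ (σ, x)).Dom → (Φ (τ, x)).Dom

/-- `dom Φ(σ)` for a finite string `σ`. -/
def TuringFunctional.domStr (F : TuringFunctional) (σ : BinStr) : Set ℕ :=
  {x | (F.Φ (σ, x)).Dom}

/-- `dom Φ(X)` for `X ∈ 2^ℕ`: the union of `dom Φ(σ)` over initial segments `σ` of `X`. -/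
def TuringFunctional.domF (F : TuringFunctional) (X : ℕ → Bool) : Set ℕ :=
  {x | ∃ σ, IsInitSeg σ X ∧ (F.Φ (σ, x)).Dom}

/-- `C ≤_T X` via a monotone partial computable functional with Boolean values. -/
def ReducibleToFun (C : Set ℕ) (X : ℕ → Bool) : Prop :=
  ∃ Ψ : BinStr × ℕ →. Bool,
    Partrec Ψ ∧
    (∀ ⦃σ τ : BinStr⦄, σ <+: τ → ∀ x b, b ∈ Ψ (σ, x) → b ∈ Ψ (τ, x)) ∧
    (∀ x, ∃ σ, IsInitSeg σ X ∧ (Ψ (σ, x)).Dom) ∧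
    (∀ σ x b, IsInitSeg σ X → b ∈ Ψ (σ, x) → (b = true ↔ x ∈ C))

/-- `S` is a `Σ⁰₃` set of binary strings. -/
def Sigma3 (S : Set BinStr) : Prop :=
  ∃ P : BinStr → ℕ → ℕ → ℕ → Bool,
    (Computable fun q : BinStr × ℕ × ℕ × ℕ => P q.1 q.2.1 q.2.2.1 q.2.2.2) ∧
    ∀ σ, σ ∈ S ↔ ∃ a, ∀ b, ∃ c, P σ a b c = true

/-- `G ∈ 2^ℕ` is `3`-generic: it meets or strongly avoids every `Σ⁰₃` set of strings. -/
def ThreeGeneric (G : ℕ → Bool) : Prop :=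
  ∀ S : Set BinStr, Sigma3 S →
    (∃ σ, IsInitSeg σ G ∧ σ ∈ S) ∨ (∃ σ, IsInitSeg σ G ∧ ∀ τ, σ <+: τ → τ ∉ S)

/-- Binary trees: sets of strings closed under initial segments. -/
def IsTree (T : Set BinStr) : Prop := ∀ σ ∈ T, ∀ τ, τ <+: σ → τ ∈ T

/-- `[T]`, the set of infinite paths through `T`. -/
def paths (T : Set BinStr) : Set (ℕ → Bool) := {X | ∀ σ, IsInitSeg σ X → σ ∈ T}

/-- A computable set of binary strings. -/
def ComputableStrSet (T : Set BinStr) : Prop :=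
  ∃ f : BinStr → Bool, Computable f ∧ ∀ σ, σ ∈ T ↔ f σ = true

/-- The fair-coin (uniform) product measure on Cantor space `ℕ → Bool`, realized as
the pushforward of Lebesgue measure on `[0,1)` under the binary-digit map. -/
noncomputable def fairCoin : Measure (ℕ → Bool) :=
  Measure.map (fun x : ℝ => fun n : ℕ => decide (⌊x * 2 ^ (n + 1)⌋ % 2 = 1))
    (volume.restrict (Set.Ico (0 : ℝ) 1))

/-- The basic clopen set `[σ]` of all `X ∈ 2^ℕ` extending `σ`. -/
def cyl (σ : BinStr) : Set (ℕ → Bool) := {X | IsInitSeg σ X}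

/-- A computably enumerable set of pairs `(n, σ)`. -/
def CEStrSet (W : Set (ℕ × BinStr)) : Prop :=
  ∃ f : ℕ × BinStr →. Unit, Partrec f ∧ ∀ p, p ∈ W ↔ (f p).Dom

/-- `X` is Martin-Löf random: it passes every Martin-Löf test. -/
def MLRandom (X : ℕ → Bool) : Prop :=
  ∀ W : Set (ℕ × BinStr), CEStrSet W →
    (∀ n : ℕ, fairCoin (⋃ σ ∈ {σ | (n, σ) ∈ W}, cyl σ) ≤ 1 / 2 ^ n) →
    X ∉ ⋂ n : ℕ, ⋃ σ ∈ {σ | (n, σ) ∈ W}, cyl σ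

/-- A uniformly computable enumeration of binary trees containing every computable
binary tree. -/
def TreeEnum (T : ℕ → Set BinStr) : Prop :=
  (∃ f : ℕ → BinStr → Bool, Computable₂ f ∧ ∀ e σ, σ ∈ T e ↔ f e σ = true) ∧
  (∀ e, IsTree (T e)) ∧
  (∀ S, IsTree S → ComputableStrSet S → ∃ e, T e = S)

/-- The set `D_{e,0}` of strings forcing `dom Φ(G)` to be bounded. -/
def D0 (F : TuringFunctional) : Set BinStr :=
  {τ | ∃ x : ℕ, ∀ ρ, τ <+: ρ → (F.domStr ρ).encard < (x : ℕ∞)}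

/-- The set `D_{e,1,n}` of strings forcing `dom Φ(G)` to be split by `R n`. -/
def D1 (R : ℕ → Set ℕ) (F : TuringFunctional) (n : ℕ) : Set BinStr :=
  {τ | ∀ ρ, τ <+: ρ → ∀ x : ℕ, ∃ ζ, ρ <+: ζ ∧ ∃ u v, x < u ∧ x < v ∧
    u ∈ F.domStr ζ ∧ v ∈ F.domStr ζ ∧ (u ∈ R n ↔ v ∉ R n)}

/-! Suppose that `dom Φ(G)` is cohesive. Genericity yields an initial segment `σ` of `G` above which
no string forces `dom Φ(G)` to be bounded, while for each `n` every string has an extension forcing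
`dom Φ(G)` to lie, above some `x`, on one side of `R n`. Choosing such extensions one after the
other above `σ` determines a side for every `n`. That a string forces a given side above a given
`x` is a `Π⁰₁` condition, so these sides are limit computable; finitely many of them always have an
unbounded intersection, because the string reached so far does not force `dom Φ(G)` to be bounded.
Searching at step `k` for a larger element that lies on the first `k` sides according to some
approximation later than stage `k` then produces an increasing computable sequence, whose range is
`R`-cohesive. -/

open Filter

section ComputablePredicates

variable {α β : Type*} [Primcodable α] [Primcodable β]

theorem computablePred_comp {p : β → Prop} (hp : ComputablePred p) {f : α → β}
    (hf : Computable f) : ComputablePred fun a => p (f a) :=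
  let ⟨_, hp⟩ := hp
  (hp.comp hf).computablePred

theorem computablePred_and {p q : α → Prop} (hp : ComputablePred p) (hq : ComputablePred q) :
    ComputablePred fun a => p a ∧ q a :=
  let ⟨_, hp⟩ := hp
  let ⟨_, hq⟩ := hq
  ((Primrec.and.to_comp.comp hp hq).of_eq fun _ => by simp).computablePred

theorem computablePred_lt {f g : α → ℕ} (hf : Computable f) (hg : Computable g) :
    ComputablePred fun a => f a < g a :=
  computablePred_comp (p := fun q : ℕ × ℕ => q.1 < q.2)
    (PrimrecPred.computablePred Primrec.nat_lt) (hf.pair hg)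

theorem computablePred_eq {f g : α → β} (hf : Computable f) (hg : Computable g) :
    ComputablePred fun a => f a = g a :=
  computablePred_comp (p := fun q : β × β => q.1 = q.2)
    (PrimrecPred.computablePred Primrec.eq) (hf.pair hg)

theorem computablePred_forall_lt {p : α × ℕ → Prop} (hp : ComputablePred p) {f : α → ℕ}
    (hf : Computable f) : ComputablePred fun a => ∀ i < f a, p (a, i) := by
  classical
  have hstep : Computable₂ fun (a : α) (q : ℕ × Bool) => q.2 && decide (p (a, q.1)) :=
    Primrec.and.to_comp.comp (Computable.snd.comp Computable.snd)
      (hp.decide.comp (Computable.fst.pair (Computable.fst.comp Computable.snd)))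
  refine ((Computable.nat_rec hf (Computable.const true) hstep).of_eq fun a => ?_).computablePred
  induction f a with
  | zero => simp
  | succ n ih => simp only [ih, Nat.forall_lt_succ_right, Bool.decide_and]

end ComputablePredicates

section Enumerability

variable {α β : Type*} [Primcodable α] [Primcodable β]

theorem rePred_comp {p : β → Prop} (hp : REPred p) {f : α → β} (hf : Computable f) :
    REPred fun a => p (f a) :=
  Partrec.comp hp hf

theorem rePred_and {p q : α → Prop} (hp : REPred p) (hq : REPred q) :
    REPred fun a => p a ∧ q a :=
  (Partrec.bind hp (Partrec.comp hq Computable.fst).to₂).of_eq fun a => by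
    ext; simp

theorem exists_monotone_stages {p : α → Prop} (hp : REPred p) :
    ∃ H : α → ℕ → Bool, Computable₂ H ∧ (∀ a, Monotone (H a)) ∧
      ∀ a, p a ↔ ∃ k, H a k = true := by
  obtain ⟨c, hc⟩ := Nat.Partrec.Code.exists_code.1 hp
  refine ⟨fun a k => (c.evaln k (Encodable.encode a)).isSome, ?_, fun a k l hkl => ?_, fun a => ?_⟩
  · exact Primrec.option_isSome.to_comp.comp (Nat.Partrec.Code.primrec_evaln.to_comp.comp
      ((Computable.snd.pair (Computable.const c)).pair (Computable.encode.comp Computable.fst)))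
  · refine Bool.le_iff_imp.2 fun h => ?_
    obtain ⟨x, hx⟩ := Option.isSome_iff_exists.1 h
    exact Option.isSome_iff_exists.2 ⟨x, Nat.Partrec.Code.evaln_mono hkl hx⟩
  · have hdom : p a ↔ (c.eval (Encodable.encode a)).Dom := by simp [hc, Part.assert]
    simp only [hdom, Part.dom_iff_mem, Nat.Partrec.Code.evaln_complete,
      Option.isSome_iff_exists, Option.mem_def]
    exact exists_comm

theorem exists_partrec_choice {p : α × β → Prop} (hp : REPred p) :
    ∃ h : α →. β, Partrec h ∧ (∀ a, ∀ b ∈ h a, p (a, b)) ∧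
      ∀ a, (h a).Dom ↔ ∃ b, p (a, b) := by
  obtain ⟨H, hH, -, hpH⟩ := exists_monotone_stages hp
  let search (a : α) (w : ℕ) : Option β :=
    (Encodable.decode (α := β × ℕ) w).bind fun q => cond (H (a, q.1) q.2) (some q.1) none
  have hsearch : Computable₂ search := by
    refine Computable.option_bind (Computable.decode.comp Computable.snd) ?_
    have hb : Computable fun r : (α × ℕ) × (β × ℕ) => r.2.1 :=
      Computable.fst.comp Computable.snd
    exact Computable.cond
      (hH.comp ((Computable.fst.comp Computable.fst).pair hb) (Computable.snd.comp Computable.snd))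
      (Computable.option_some.comp hb) (Computable.const none)
  have mem_search {a w b} : b ∈ search a w ↔
      ∃ k, Encodable.decode (α := β × ℕ) w = some (b, k) ∧ H (a, b) k = true := by
    simp only [search, Option.mem_def, Option.bind_eq_some_iff, Prod.exists]
    constructor
    · rintro ⟨b', k, hw, h⟩
      cases hk : H (a, b') k <;> simp only [hk, cond_true, cond_false, Option.some.injEq,
        reduceCtorEq] at h
      subst h
      exact ⟨k, hw, hk⟩
    · rintro ⟨k, hw, hk⟩
      exact ⟨b, k, hw, by simp [hk]⟩
  refine ⟨fun a => Nat.rfindOpt (search a), Partrec.rfindOpt hsearch, fun a b hb => ?_,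
    fun a => ?_⟩
  · obtain ⟨w, hw⟩ := Nat.rfindOpt_spec hb
    obtain ⟨k, -, hk⟩ := mem_search.1 hw
    exact (hpH _).2 ⟨k, hk⟩
  · simp only [Nat.rfindOpt_dom, mem_search, hpH]
    constructor
    · rintro ⟨-, b, k, -, hk⟩
      exact ⟨b, k, hk⟩
    · rintro ⟨b, k, hk⟩
      exact ⟨Encodable.encode (b, k), b, k, Encodable.encodek _, hk⟩

theorem rePred_exists {p : α × β → Prop} (hp : REPred p) : REPred fun a => ∃ b, p (a, b) :=
  let ⟨_, hh, _, hdom⟩ := exists_partrec_choice hp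
  hh.dom_re.of_eq hdom

theorem exists_computable_choice {p : α × β → Prop} (hp : REPred p) (hex : ∀ a, ∃ b, p (a, b)) :
    ∃ h : α → β, Computable h ∧ ∀ a, p (a, h a) :=
  let ⟨_, hh, hspec, hdom⟩ := exists_partrec_choice hp
  ⟨fun a => Part.get _ ((hdom a).2 (hex a)), hh.of_eq_tot fun _ => Part.get_mem _,
    fun a => hspec a _ (Part.get_mem _)⟩

theorem exists_computable_surjective (β : Type*) [Primcodable β] [Nonempty β] :
    ∃ e : ℕ → β, Computable e ∧ Function.Surjective e :=
  let b : β := Classical.arbitrary β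
  ⟨fun n => (Encodable.decode n).getD b,
    Computable.option_getD Computable.decode (Computable.const b),
    fun c => ⟨Encodable.encode c, by simp⟩⟩

theorem ComputableSet.range_of_strictMono {c : ℕ → ℕ} (hc : Computable c) (hmono : StrictMono c) :
    ComputableSet (Set.range c) := by
  have hex (m : ℕ) : ∃ i, ¬ c i < m := ⟨m, hmono.le_apply.not_gt⟩
  have hfind : Computable fun m => Nat.find (hex m) :=
    Computable.find (computablePred_lt (hc.comp Computable.snd) Computable.fst).not hex
  refine ⟨_, (computablePred_eq (hc.comp hfind) Computable.id).decide, fun m => ?_⟩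
  simp only [decide_eq_true_eq, id_eq]
  refine ⟨?_, fun h => ⟨_, h⟩⟩
  rintro ⟨i, rfl⟩
  exact le_antisymm (hmono.monotone (Nat.find_min' (hex _) (lt_irrefl _)))
    (not_lt.1 (Nat.find_spec (hex (c i))))

end Enumerability

section LimitComputability

variable {α β γ : Type*} [Primcodable α] [Primcodable β] [Primcodable γ]

/-- `f` is limit computable: it is the pointwise limit, in the discrete topology, of a uniformly
computable sequence of functions. By Shoenfield's limit lemma this is computability relative to the
halting problem. -/
def LimitComputable (f : α → β) : Prop :=
  ∃ g : α → ℕ → β, Computable₂ g ∧ ∀ a, ∀ᶠ s in atTop, g a s = f a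

theorem LimitComputable.of_computable {f : α → β} (hf : Computable f) : LimitComputable f :=
  ⟨fun a _ => f a, hf.comp Computable.fst, fun _ => Eventually.of_forall fun _ => rfl⟩

theorem LimitComputable.comp {f : β → γ} {g : α → β} (hf : LimitComputable f)
    (hg : LimitComputable g) : LimitComputable fun a => f (g a) := by
  obtain ⟨f', hf', hflim⟩ := hf
  obtain ⟨g', hg', hglim⟩ := hg
  refine ⟨fun a s => f' (g' a s) s, hf'.comp hg' Computable.snd, fun a => ?_⟩
  filter_upwards [hglim a, hflim (g a)] with s hgs hfs
  rw [hgs, hfs]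

theorem LimitComputable.pair {f : α → β} {g : α → γ} (hf : LimitComputable f)
    (hg : LimitComputable g) : LimitComputable fun a => (f a, g a) := by
  obtain ⟨f', hf', hflim⟩ := hf
  obtain ⟨g', hg', hglim⟩ := hg
  refine ⟨fun a s => (f' a s, g' a s), Computable.pair hf' hg', fun a => ?_⟩
  filter_upwards [hflim a, hglim a] with s hfs hgs
  rw [hfs, hgs]

theorem LimitComputable.nat_rec {h : ℕ × β → β} (hh : LimitComputable h) (b : β) :
    LimitComputable fun n : ℕ => (Nat.rec b (fun i c => h (i, c)) n : β) := by
  obtain ⟨g, hg, hlim⟩ := hh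
  refine ⟨fun n s => Nat.rec b (fun i c => g (i, c) s) n, ?_, fun n => ?_⟩
  · exact Computable.nat_rec Computable.fst (Computable.const b)
      (hg.comp Computable.snd (Computable.snd.comp Computable.fst)).to₂
  · induction n with
    | zero => exact Eventually.of_forall fun _ => rfl
    | succ n ih =>
      filter_upwards [ih, hlim (n, Nat.rec b (fun i c => h (i, c)) n)] with s hprev hnext
      simp only [hprev, hnext]

/-- The approximation at stage `s` is the least index not refuted within `s` steps. -/
theorem exists_limitComputable_find {p : α × ℕ → Prop} (hp : REPred p)
    (hex : ∀ a, ∃ k, ¬ p (a, k)) :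
    ∃ h : α → ℕ, LimitComputable h ∧ ∀ a, ¬ p (a, h a) := by
  classical
  obtain ⟨H, hH, hmono, hpH⟩ := exists_monotone_stages hp
  let refuted (q : α × ℕ) (k : ℕ) : Prop := k < q.2 ∧ H (q.1, k) q.2 = true
  have hrefuted : ComputablePred fun r : (α × ℕ) × ℕ => refuted r.1 r.2 :=
    computablePred_and (computablePred_lt Computable.snd (Computable.snd.comp Computable.fst))
      (computablePred_eq (hH.comp ((Computable.fst.comp Computable.fst).pair Computable.snd)
        (Computable.snd.comp Computable.fst)) (Computable.const true))
  have hstage (q : α × ℕ) : ∃ k, ¬ refuted q k := ⟨q.2, fun h => lt_irrefl _ h.1⟩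
  refine ⟨fun a => Nat.find (hex a), ⟨fun a s => Nat.find (hstage (a, s)),
    Computable.find hrefuted.not hstage, fun a => ?_⟩, fun a => Nat.find_spec (hex a)⟩
  have hbelow : ∀ᶠ s in atTop, ∀ k < Nat.find (hex a), refuted (a, s) k := by
    refine (Set.finite_Iio _).eventually_all.2 fun k hk => ?_
    obtain ⟨t, ht⟩ := (hpH _).1 (not_not.1 (Nat.find_min (hex a) hk))
    filter_upwards [eventually_gt_atTop k, eventually_ge_atTop t] with s hks hts
    exact ⟨hks, Bool.le_iff_imp.1 (hmono _ hts) ht⟩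
  filter_upwards [hbelow] with s hs
  refine (Nat.find_eq_iff _).2 ⟨fun h => ?_, fun k hk => not_not.2 (hs k hk)⟩
  exact Nat.find_spec (hex a) ((hpH _).2 ⟨s, h.2⟩)

theorem exists_limitComputable_choice [Nonempty β] {p : α × β → Prop} (hp : REPred p)
    (hex : ∀ a, ∃ b, ¬ p (a, b)) :
    ∃ h : α → β, LimitComputable h ∧ ∀ a, ¬ p (a, h a) := by
  obtain ⟨e, he, hsurj⟩ := exists_computable_surjective β
  obtain ⟨k, hk, hkp⟩ := exists_limitComputable_find
    (rePred_comp hp (Computable.fst.pair (he.comp Computable.snd)))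
    (fun a => hsurj.exists.1 (hex a))
  exact ⟨fun a => e (k a), (LimitComputable.of_computable he).comp hk, hkp⟩

theorem exists_limitComputable_chain [Nonempty β] {p : ℕ × β × List γ → Prop} (hp : REPred p)
    (hex : ∀ n τ, ∃ ρ e, ¬ p (n, e, τ ++ ρ)) :
    ∃ (τ : ℕ → List γ) (e : ℕ → β), LimitComputable e ∧ (∀ n, τ n <+: τ (n + 1)) ∧
      ∀ n, ¬ p (n, e n, τ (n + 1)) := by
  have hextend : Computable fun q : (ℕ × List γ) × List γ × β => q.1.2 ++ q.2.1 :=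
    Computable.list_append.comp (Computable.snd.comp Computable.fst)
      (Computable.fst.comp Computable.snd)
  obtain ⟨h, hh, hspec⟩ := exists_limitComputable_choice
    (rePred_comp hp ((Computable.fst.comp Computable.fst).pair
      ((Computable.snd.comp Computable.snd).pair hextend)))
    fun q => let ⟨ρ, e, he⟩ := hex q.1 q.2; ⟨(ρ, e), he⟩
  have hpair : LimitComputable fun q : ℕ × List γ => (q, h q) :=
    (LimitComputable.of_computable Computable.id).pair hh
  let τ (n : ℕ) : List γ := Nat.rec [] (fun i ρ => ρ ++ (h (i, ρ)).1) n
  have hτ : LimitComputable τ :=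
    LimitComputable.nat_rec ((LimitComputable.of_computable hextend).comp hpair) []
  have he : LimitComputable fun n => (h (n, τ n)).2 :=
    (LimitComputable.of_computable Computable.snd).comp
      (hh.comp ((LimitComputable.of_computable Computable.id).pair hτ))
  exact ⟨τ, _, he, fun _ => List.prefix_append _ _, fun n => hspec (n, τ n)⟩

theorem exists_computable_strictMono_of_limitComputable {f : ℕ → ℕ → β} (hf : Computable₂ f)
    {b : ℕ → β} (hb : LimitComputable b) (hinf : ∀ n N, ∃ u, N < u ∧ ∀ i < n, f i u = b i) :
    ∃ c : ℕ → ℕ, Computable c ∧ StrictMono c ∧ ∀ n, ∀ᶠ k in atTop, f n (c k) = b n := by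
  obtain ⟨g, hg, hlim⟩ := hb
  let next (q : (ℕ × ℕ) × ℕ × ℕ) : Prop :=
    (q.1.1 < q.2.1 ∧ q.1.2 < q.2.2) ∧ ∀ i < q.1.1, f i q.2.2 = g i q.2.1
  have hnext : REPred next := by
    have hn : Computable fun q : (ℕ × ℕ) × ℕ × ℕ => q.1.1 := Computable.fst.comp Computable.fst
    have ht : Computable fun q : (ℕ × ℕ) × ℕ × ℕ => q.2.1 := Computable.fst.comp Computable.snd
    have hu : Computable fun q : (ℕ × ℕ) × ℕ × ℕ => q.2.2 := Computable.snd.comp Computable.snd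
    refine (computablePred_and (computablePred_and (computablePred_lt hn ht)
      (computablePred_lt (Computable.snd.comp Computable.fst) hu)) ?_).to_re
    exact computablePred_forall_lt (computablePred_eq
      (hf.comp Computable.snd (hu.comp Computable.fst))
      (hg.comp Computable.snd (ht.comp Computable.fst))) hn
  have hex (q : ℕ × ℕ) : ∃ r, next (q, r) := by
    obtain ⟨u, hu, hfu⟩ := hinf q.1 q.2
    have hstage : ∀ᶠ t in atTop, ∀ i < q.1, g i t = b i :=
      (Set.finite_Iio q.1).eventually_all.2 fun i _ => hlim i
    obtain ⟨t, ht, hgt⟩ := ((eventually_gt_atTop q.1).and hstage).exists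
    exact ⟨(t, u), ⟨ht, hu⟩, fun i hi => (hfu i hi).trans (hgt i hi).symm⟩
  obtain ⟨h, hh, hspec⟩ := exists_computable_choice hnext hex
  let c (n : ℕ) : ℕ := Nat.rec 0 (fun k u => (h (k, u)).2) n
  have hc (k : ℕ) : ∃ t, k < t ∧ c k < c (k + 1) ∧ ∀ i < k, f i (c (k + 1)) = g i t :=
    ⟨(h (k, c k)).1, and_assoc.1 (hspec (k, c k))⟩
  refine ⟨c, ?_, strictMono_nat_of_lt_succ fun k => (hc k).choose_spec.2.1, fun n => ?_⟩
  · exact Computable.nat_rec Computable.id (Computable.const 0)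
      (Computable.snd.comp (hh.comp Computable.snd)).to₂
  · obtain ⟨T, hT⟩ := eventually_atTop.1 (hlim n)
    filter_upwards [eventually_gt_atTop (max n T + 1)] with k hk
    obtain ⟨k, rfl⟩ : ∃ j, k = j + 1 := ⟨k - 1, by omega⟩
    obtain ⟨t, ht, -, hft⟩ := hc k
    rw [hft n (by omega), hT t (by omega)]

end LimitComputability

section Cohesiveness

/-- The elements above `x` at which the `n`-th characteristic function `f n` differs from `b`. For
`f` the characteristic functions of a sequence `R`, an infinite set is `R`-cohesive iff for each `n`
it is disjoint from `exceptions f n x b` for some `x` and `b`. -/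
def exceptions (f : ℕ → ℕ → Bool) (n x : ℕ) (b : Bool) : Set ℕ := {u | x < u ∧ f n u ≠ b}

theorem subsetStar_iff_exists_forall_lt {A B : Set ℕ} :
    SubsetStar A B ↔ ∃ x, ∀ u ∈ A, x < u → u ∈ B := by
  rw [SubsetStar, Set.finite_iff_bddAbove]
  refine exists_congr fun x => forall_congr' fun u => ?_
  rw [Set.mem_sdiff, ← not_le]
  tauto

variable {R : ℕ → Set ℕ} {f : ℕ → ℕ → Bool}

theorem cohesive_iff_disjoint_exceptions (hRf : ∀ n x, x ∈ R n ↔ f n x = true) {C : Set ℕ} :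
    Cohesive R C ↔ C.Infinite ∧ ∀ n, ∃ x b, Disjoint C (exceptions f n x b) := by
  refine and_congr_right fun _ => forall_congr' fun n => ?_
  simp only [subsetStar_iff_exists_forall_lt, Set.mem_compl_iff, hRf, Set.disjoint_left,
    exceptions, Set.mem_ofPred_eq, not_and, not_not, Bool.exists_bool, Bool.not_eq_true,
    exists_or]
  exact or_comm

theorem exists_computable_cohesive (hf : Computable₂ f) (hRf : ∀ n x, x ∈ R n ↔ f n x = true)
    {b : ℕ → Bool} (hb : LimitComputable b)
    (hinf : ∀ n N, ∃ u, N < u ∧ ∀ i < n, f i u = b i) :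
    ∃ C, ComputableSet C ∧ Cohesive R C := by
  obtain ⟨c, hc, hmono, hlim⟩ := exists_computable_strictMono_of_limitComputable hf hb hinf
  refine ⟨Set.range c, .range_of_strictMono hc hmono,
    (cohesive_iff_disjoint_exceptions hRf).2
      ⟨Set.infinite_range_of_injective hmono.injective, fun n => ?_⟩⟩
  obtain ⟨T, hT⟩ := eventually_atTop.1 (hlim n)
  refine ⟨c T, b n, Set.disjoint_left.2 ?_⟩
  rintro _ ⟨k, rfl⟩ ⟨hk, hne⟩
  exact hne (hT k (hmono.lt_iff_lt.1 hk).le)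

end Cohesiveness

section Forcing

/-- `σ` strongly avoids `S`: no extension of `σ` lies in `S`. This is the second alternative in the
definition of genericity. -/
def StronglyAvoids (S : Set BinStr) (σ : BinStr) : Prop := ∀ τ, σ <+: τ → τ ∉ S

theorem not_stronglyAvoids_iff {S : Set BinStr} {σ : BinStr} :
    ¬ StronglyAvoids S σ ↔ ∃ τ, σ ++ τ ∈ S := by
  simp only [StronglyAvoids, List.IsPrefix]
  grind

theorem StronglyAvoids.mono {S : Set BinStr} {σ τ : BinStr} (hσ : StronglyAvoids S σ)
    (h : σ <+: τ) : StronglyAvoids S τ :=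
  fun ρ hρ => hσ ρ (h.trans hρ)

/-- The strings `σ` for which `D σ` meets `A`. With `D = F.domStr` these are the strings forcing
`dom Φ(G)` to meet `A`. -/
def hitting (D : BinStr → Set ℕ) (A : Set ℕ) : Set BinStr := {σ | (D σ ∩ A).Nonempty}

variable {α : Type*} [Primcodable α] {D : BinStr → Set ℕ} {f : ℕ → ℕ → Bool}

theorem rePred_not_stronglyAvoids {S : α → Set BinStr}
    (hS : REPred fun q : α × BinStr => q.2 ∈ S q.1) :
    REPred fun q : α × BinStr => ¬ StronglyAvoids (S q.1) q.2 := by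
  simp only [not_stronglyAvoids_iff]
  exact rePred_exists (rePred_comp hS ((Computable.fst.comp Computable.fst).pair
    (Computable.list_append.comp (Computable.snd.comp Computable.fst) Computable.snd)))

theorem rePred_hitting (hD : REPred fun q : BinStr × ℕ => q.2 ∈ D q.1) {A : α → Set ℕ}
    (hA : ComputablePred fun q : α × ℕ => q.2 ∈ A q.1) :
    REPred fun q : α × BinStr => q.2 ∈ hitting D (A q.1) :=
  rePred_exists (rePred_and
    (rePred_comp hD ((Computable.snd.comp Computable.fst).pair Computable.snd))
    (rePred_comp hA.to_re ((Computable.fst.comp Computable.fst).pair Computable.snd)))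

theorem computablePred_exceptions (hf : Computable₂ f) :
    ComputablePred fun q : (ℕ × ℕ × Bool) × ℕ => q.2 ∈ exceptions f q.1.1 q.1.2.1 q.1.2.2 :=
  computablePred_and
    (computablePred_lt (Computable.fst.comp (Computable.snd.comp Computable.fst)) Computable.snd)
    (computablePred_eq (hf.comp (Computable.fst.comp Computable.fst) Computable.snd)
      (Computable.snd.comp (Computable.snd.comp Computable.fst))).not

theorem rePred_hitting_exceptions (hf : Computable₂ f)
    (hD : REPred fun q : BinStr × ℕ => q.2 ∈ D q.1) :
    REPred fun q : (ℕ × ℕ × Bool) × BinStr =>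
      q.2 ∈ hitting D (exceptions f q.1.1 q.1.2.1 q.1.2.2) :=
  rePred_hitting (A := fun e : ℕ × ℕ × Bool => exceptions f e.1 e.2.1 e.2.2) hD
    (computablePred_exceptions hf)

theorem rePred_not_stronglyAvoids_hitting_exceptions (hf : Computable₂ f)
    (hD : REPred fun q : BinStr × ℕ => q.2 ∈ D q.1) :
    REPred fun q : (ℕ × ℕ × Bool) × BinStr =>
      ¬ StronglyAvoids (hitting D (exceptions f q.1.1 q.1.2.1 q.1.2.2)) q.2 :=
  rePred_not_stronglyAvoids (S := fun e : ℕ × ℕ × Bool => hitting D (exceptions f e.1 e.2.1 e.2.2))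
    (rePred_hitting_exceptions hf hD)

theorem exists_limitComputable_sides (hf : Computable₂ f)
    (hD : REPred fun q : BinStr × ℕ => q.2 ∈ D q.1) {σ : BinStr}
    (hunb : ∀ τ, σ <+: τ → ∀ x, ¬ StronglyAvoids (hitting D (Set.Ioi x)) τ)
    (hdec : ∀ τ, σ <+: τ → ∀ n, ∃ ρ x b, StronglyAvoids (hitting D (exceptions f n x b)) (τ ++ ρ)) :
    ∃ b : ℕ → Bool, LimitComputable b ∧ ∀ n N, ∃ u, N < u ∧ ∀ i < n, f i u = b i := by
  have hforced : Computable fun q : ℕ × (ℕ × Bool) × BinStr => ((q.1, q.2.1), σ ++ q.2.2) :=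
    (Computable.fst.pair (Computable.fst.comp Computable.snd)).pair
      (Computable.list_append.comp (Computable.const σ) (Computable.snd.comp Computable.snd))
  obtain ⟨τ, e, he, hτ, hforce⟩ := exists_limitComputable_chain
    (rePred_comp (rePred_not_stronglyAvoids_hitting_exceptions hf hD) hforced) fun n τ => by
      obtain ⟨ρ, x, b, hb⟩ := hdec (σ ++ τ) (List.prefix_append _ _) n
      exact ⟨ρ, (x, b), not_not.2 (List.append_assoc σ τ ρ ▸ hb)⟩
  have hchain {i n : ℕ} (hin : i < n) :
      StronglyAvoids (hitting D (exceptions f i (e i).1 (e i).2)) (σ ++ τ n) := by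
    induction n, hin using Nat.le_induction with
    | base => exact not_not.1 (hforce i)
    | succ n _ ih => exact ih.mono ((List.prefix_append_right_inj σ).2 (hτ n))
  refine ⟨fun n => (e n).2, (LimitComputable.of_computable Computable.snd).comp he, fun n N => ?_⟩
  obtain ⟨ζ, u, hu, hlt⟩ := not_stronglyAvoids_iff.1
    (hunb (σ ++ τ n) (List.prefix_append _ _) (N + ∑ i ∈ Finset.range n, (e i).1))
  have hlt : N + ∑ i ∈ Finset.range n, (e i).1 < u := hlt
  refine ⟨u, by omega, fun i hi => ?_⟩
  have hle := Finset.single_le_sum_of_canonicallyOrdered (f := fun i => (e i).1)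
    (Finset.mem_range.2 hi)
  by_contra hne
  exact hchain hi _ (List.prefix_append _ ζ) ⟨u, hu, by omega, hne⟩

end Forcing

section Genericity

theorem sigma3_exists_forall {α β : Type*} [Primcodable α] [Nonempty α] [Primcodable β] [Nonempty β]
    {p : BinStr × α × β → Prop} (hp : REPred p) : Sigma3 {σ | ∃ a, ∀ b, p (σ, a, b)} := by
  obtain ⟨d, hd, hdsurj⟩ := exists_computable_surjective α
  obtain ⟨e, he, hesurj⟩ := exists_computable_surjective β
  obtain ⟨H, hH, -, hpH⟩ := exists_monotone_stages hp
  refine ⟨fun σ a b => H (σ, d a, e b), ?_, fun σ => ?_⟩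
  · have hb : Computable fun q : BinStr × ℕ × ℕ × ℕ => q.2.2 := Computable.snd.comp Computable.snd
    exact hH.comp (Computable.fst.pair ((hd.comp (Computable.fst.comp Computable.snd)).pair
      (he.comp (Computable.fst.comp hb)))) (Computable.snd.comp hb)
  · simp only [Set.mem_ofPred_eq, hdsurj.exists, hesurj.forall, hpH]

theorem sigma3_of_rePred {S : Set BinStr} (hS : REPred (· ∈ S)) : Sigma3 S := by
  simpa using sigma3_exists_forall (α := Unit) (β := Unit) (rePred_comp hS Computable.fst)

theorem sigma3_exists_not {α : Type*} [Primcodable α] [Nonempty α] {p : BinStr × α → Prop}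
    (hp : REPred p) : Sigma3 {σ | ∃ a, ¬ p (σ, a)} := by
  obtain ⟨H, hH, -, hpH⟩ := exists_monotone_stages hp
  have hfalse : REPred fun q : BinStr × α × ℕ => H (q.1, q.2.1) q.2.2 = false :=
    (computablePred_eq (hH.comp (Computable.fst.pair (Computable.fst.comp Computable.snd))
      (Computable.snd.comp Computable.snd)) (Computable.const false)).to_re
  simpa only [hpH, not_exists, Bool.not_eq_true] using sigma3_exists_forall hfalse

theorem IsInitSeg.prefix_of_length_le {σ τ : BinStr} {X : ℕ → Bool} (hσ : IsInitSeg σ X)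
    (hτ : IsInitSeg τ X) (hle : σ.length ≤ τ.length) : σ <+: τ := by
  refine List.prefix_iff_getElem.2 ⟨hle, fun i hi => ?_⟩
  have hσi := hσ i hi
  have hτi := hτ i (hi.trans_le hle)
  rw [List.getD_eq_getElem _ _ hi] at hσi
  rw [List.getD_eq_getElem _ _ (hi.trans_le hle)] at hτi
  rw [hσi, hτi]

theorem IsInitSeg.exists_common_extension {σ τ : BinStr} {X : ℕ → Bool} (hσ : IsInitSeg σ X)
    (hτ : IsInitSeg τ X) : ∃ ρ, IsInitSeg ρ X ∧ σ <+: ρ ∧ τ <+: ρ :=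
  (le_total σ.length τ.length).elim
    (fun hle => ⟨τ, hτ, hσ.prefix_of_length_le hτ hle, List.prefix_rfl⟩)
    (fun hle => ⟨σ, hσ, List.prefix_rfl, hτ.prefix_of_length_le hσ hle⟩)

theorem ThreeGeneric.exists_stronglyAvoids {G : ℕ → Bool} (hG : ThreeGeneric G) {S : Set BinStr}
    (hS : Sigma3 S) (havoid : ∀ σ, IsInitSeg σ G → σ ∉ S) :
    ∃ σ, IsInitSeg σ G ∧ StronglyAvoids S σ :=
  (hG S hS).resolve_left fun ⟨σ, hσ, hσS⟩ => havoid σ hσ hσS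

variable {F : TuringFunctional} {G : ℕ → Bool}

theorem TuringFunctional.rePred_domStr (F : TuringFunctional) :
    REPred fun q : BinStr × ℕ => q.2 ∈ F.domStr q.1 :=
  F.partrec.dom_re

theorem ThreeGeneric.exists_not_stronglyAvoids_Ioi (hG : ThreeGeneric G)
    (hinf : (F.domF G).Infinite) :
    ∃ σ, IsInitSeg σ G ∧ ∀ τ, σ <+: τ → ∀ x,
      ¬ StronglyAvoids (hitting F.domStr (Set.Ioi x)) τ := by
  have hre := rePred_not_stronglyAvoids (S := fun x => hitting F.domStr (Set.Ioi x))
    (rePred_hitting F.rePred_domStr (computablePred_lt Computable.fst Computable.snd))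
  have hmiss : ∀ σ, IsInitSeg σ G →
      σ ∉ {σ | ∃ x, ¬ ¬ StronglyAvoids (hitting F.domStr (Set.Ioi x)) σ} := by
    rintro σ hσ ⟨x, hx⟩
    obtain ⟨u, ⟨τ, hτ, hu⟩, hxu⟩ := hinf.exists_gt x
    obtain ⟨ρ, -, hσρ, hτρ⟩ := hσ.exists_common_extension hτ
    exact not_not.1 hx ρ hσρ ⟨u, F.mono hτρ u hu, hxu⟩
  obtain ⟨σ, hσ, havoid⟩ := hG.exists_stronglyAvoids
    (sigma3_exists_not (rePred_comp hre (Computable.snd.pair Computable.fst))) hmiss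
  exact ⟨σ, hσ, fun τ hτ x hx => havoid τ hτ ⟨x, not_not.2 hx⟩⟩

theorem ThreeGeneric.exists_forall_exists_stronglyAvoids_exceptions (hG : ThreeGeneric G)
    {f : ℕ → ℕ → Bool} (hf : Computable₂ f)
    (hcoh : ∀ n, ∃ x b, Disjoint (F.domF G) (exceptions f n x b)) :
    ∃ σ, IsInitSeg σ G ∧ ∀ τ, σ <+: τ → ∀ n, ∃ ρ x b,
      StronglyAvoids (hitting F.domStr (exceptions f n x b)) (τ ++ ρ) := by
  have hforced : Computable fun q : BinStr × ℕ × BinStr × ℕ × Bool =>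
      ((q.2.1, q.2.2.2), q.1 ++ q.2.2.1) :=
    ((Computable.fst.comp Computable.snd).pair
      (Computable.snd.comp (Computable.snd.comp Computable.snd))).pair
      (Computable.list_append.comp Computable.fst
        (Computable.fst.comp (Computable.snd.comp Computable.snd)))
  -- An undecided initial segment of `G` would, by genericity for the `Σ⁰₁` sets `hitting`, make
  -- `dom Φ(G)` meet every set of exceptions to the `n`-th column.
  have hmiss : ∀ σ, IsInitSeg σ G → σ ∉ {σ | ∃ n, ∀ q : BinStr × ℕ × Bool,
      ¬ StronglyAvoids (hitting F.domStr (exceptions f n q.2.1 q.2.2)) (σ ++ q.1)} := by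
    rintro σ hσ ⟨n, hundecided⟩
    obtain ⟨x, b, hdisj⟩ := hcoh n
    have hsigma : Sigma3 (hitting F.domStr (exceptions f n x b)) :=
      sigma3_of_rePred (rePred_comp (rePred_hitting_exceptions hf F.rePred_domStr)
        ((Computable.const (n, x, b)).pair Computable.id))
    obtain ⟨τ, hτ, havoid⟩ := hG.exists_stronglyAvoids hsigma
      fun τ hτ ⟨u, hu, hux⟩ => Set.disjoint_left.1 hdisj ⟨τ, hτ, hu⟩ hux
    obtain ⟨_, -, ⟨ρ, rfl⟩, hτρ⟩ := hσ.exists_common_extension hτ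
    exact hundecided (ρ, x, b) (havoid.mono hτρ)
  obtain ⟨σ, hσ, havoid⟩ := hG.exists_stronglyAvoids (sigma3_exists_forall
    (rePred_comp (rePred_not_stronglyAvoids_hitting_exceptions hf F.rePred_domStr) hforced)) hmiss
  refine ⟨σ, hσ, fun τ hτ n => ?_⟩
  by_contra! hundecided
  exact havoid τ hτ ⟨n, fun q => hundecided q.1 q.2.1 q.2.2⟩

end Genericity

/-- **Theorem (Wang, Theorem 2.1).** If `R` is a computable sequence of subsets of `ℕ`
admitting no computable `R`-cohesive set, then for every `3`-generic `G` and every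
use-monotone Turing functional `Φ`, the set `dom Φ(G)` is not `R`-cohesive. -/
theorem domF_of_three_generic_not_cohesive
    (R : ℕ → Set ℕ) (hR : ComputableSeq R)
    (hno : ¬ ∃ C : Set ℕ, ComputableSet C ∧ Cohesive R C) :
    ∀ G : ℕ → Bool, ThreeGeneric G →
      ∀ F : TuringFunctional, ¬ Cohesive R (F.domF G) := by
  intro G hG F hcoh
  obtain ⟨f, hf, hRf⟩ := hR
  obtain ⟨hinf, hdisj⟩ := (cohesive_iff_disjoint_exceptions hRf).1 hcoh
  obtain ⟨σ₀, hσ₀, hunb⟩ := hG.exists_not_stronglyAvoids_Ioi hinf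
  obtain ⟨σ₁, hσ₁, hdec⟩ := hG.exists_forall_exists_stronglyAvoids_exceptions hf hdisj
  obtain ⟨σ, -, h₀, h₁⟩ := hσ₀.exists_common_extension hσ₁
  obtain ⟨b, hb, hbinf⟩ := exists_limitComputable_sides hf F.rePred_domStr
    (fun τ hτ => hunb τ (h₀.trans hτ)) (fun τ hτ => hdec τ (h₁.trans hτ))
  exact hno (exists_computable_cohesive hf hRf hb hbinf)
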